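/- arXiv:0707.0836 — 3 statements merged into one kernel-verified Lean document; each statement's English description precedes it below -/
import Mathlib

section
/- For every e-multipartition α of n and every integer r ≥ 0, a^c(Λ^{r,r}_b(α)) = a^c(r(Λ^{r,0}_d(α))), where r denotes the rotation of symbols. -/
namespace Spets

/-- The set of positions of a symbol with `e` rows, row `i` having `m i` entries. -/
abbrev Pos (e : ℕ) (m : ℕ → ℕ) := Σ i : Fin e, Fin (m (i : ℕ))

/-- The total order `≺` on positions: `(i,j) ≺ (k,l)` iff `j < l`, or
`j = l`, `k > 0` and `i = 0`, or `j = l`, `k > 0` and `i > k`. -/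
def posLt {e : ℕ} {m : ℕ → ℕ} (p q : Pos e m) : Prop :=
  (p.2 : ℕ) < (q.2 : ℕ) ∨
    ((p.2 : ℕ) = (q.2 : ℕ) ∧ (q.1 : ℕ) ≠ 0 ∧ ((p.1 : ℕ) = 0 ∨ (q.1 : ℕ) < (p.1 : ℕ)))

instance {e : ℕ} {m : ℕ → ℕ} (p q : Pos e m) : Decidable (posLt p q) := by
  unfold posLt; infer_instance

/-- The entry of the protosymbol `Φ^{r,s}` at a position:
row `0` is `(0, r, 2r, …)`, row `i > 0` is `(s, r+s, 2r+s, …)`. -/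
def proto (r s : ℕ) {e : ℕ} {m : ℕ → ℕ} (p : Pos e m) : ℤ :=
  (p.2 : ℤ) * (r : ℤ) + (if (p.1 : ℕ) = 0 then 0 else (s : ℤ))

/-- The entry of the symbol `Λ^{r,s}_m(α)` at a position.  Here a multipartition is
recorded as `α : ℕ → ℕ → ℕ` where `α i` is the list of the parts of the `i`-th
partition **largest part first** (so `α i` is antitone, zero-padded); the entry of the
symbol at position `(i,j)` (with row `i` of length `m i`, entries listed increasingly)
is `α i (m i - 1 - j) + Φ^{r,s}_i^{(j)}`. -/
def symb (α : ℕ → ℕ → ℕ) (r s : ℕ) {e : ℕ} {m : ℕ → ℕ} (p : Pos e m) : ℤ :=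
  (α (p.1 : ℕ) (m (p.1 : ℕ) - 1 - (p.2 : ℕ)) : ℤ) + proto r s p

/-- `a^c(Λ) = ∑_{(i,j) ≺ (k,l)} (min(Λ_i^{(j)}, Λ_k^{(l)}) - Φ_i^{(j)})`. -/
def ac {e : ℕ} {m : ℕ → ℕ} (Λ Φ : Pos e m → ℤ) : ℤ :=
  ∑ p : Pos e m, ∑ q : Pos e m, if posLt p q then min (Λ p) (Λ q) - Φ p else 0

/-- `b^c(Λ) = ∑_{(i,j) ≺ (k,l)} (Λ_i^{(j)} - Φ_i^{(j)})`. -/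
def bc {e : ℕ} {m : ℕ → ℕ} (Λ Φ : Pos e m → ℤ) : ℤ :=
  ∑ p : Pos e m, ∑ q : Pos e m, if posLt p q then Λ p - Φ p else 0

/-- A symbol is distinguished if its entries are increasing along `≺`. -/
def Distinguished {e : ℕ} {m : ℕ → ℕ} (Λ : Pos e m → ℤ) : Prop :=
  ∀ p q : Pos e m, posLt p q → Λ p ≤ Λ q

/-- The weight `b = (1,0,…,0)`, padded so that every row has `M` entries
(and row `0` has `M+1`). -/
def wB (M : ℕ) : ℕ → ℕ := fun i => if i = 0 then M + 1 else M

/-- The weight `d = (0,…,0)`, padded so that every row has `M` entries. -/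
def wD (M : ℕ) : ℕ → ℕ := fun _ => M

/-- The `k`-th power of the rotation `r(α_0, …, α_{e-1}) = (α_1, …, α_{e-1}, α_0)`
of an `e`-multipartition. -/
def rotIter (e k : ℕ) (α : ℕ → ℕ → ℕ) : ℕ → ℕ → ℕ :=
  fun i => if i < e then α ((i + k) % e) else fun _ => 0

/-- `α` is (the largest-part-first, zero-padded recording of) an `e`-multipartition
of `n` all of whose rows have at most `M` parts. -/
def IsMP (e n M : ℕ) (α : ℕ → ℕ → ℕ) : Prop :=
  (∀ i, Antitone (α i)) ∧ (∀ i j, e ≤ i ∨ M ≤ j → α i j = 0) ∧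
    (∑ i ∈ Finset.range e, ∑ j ∈ Finset.range M, α i j) = n


theorem pos_ext {e : ℕ} {m : ℕ → ℕ} {p q : Pos e m} (h1 : (p.1 : ℕ) = q.1)
    (h2 : (p.2 : ℕ) = q.2) : p = q := by
  obtain ⟨i, j⟩ := p
  obtain ⟨k, l⟩ := q
  obtain rfl : i = k := Fin.ext h1
  obtain rfl : j = l := Fin.ext h2
  rfl

theorem two_ac {e : ℕ} {m : ℕ → ℕ} (L P : Pos e m → ℤ)
    (hP : ∀ p q, posLt p q → P p ≤ P q) :
    2 * ac L P = ∑ p : Pos e m, ∑ q : Pos e m,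
      if p = q then 0 else min (L p) (L q) - min (P p) (P q) := by
  have h2 : ac L P = ∑ p : Pos e m, ∑ q : Pos e m,
      if posLt q p then min (L q) (L p) - P q else 0 := by
    unfold ac
    rw [Finset.sum_comm]
  have h1 : ac L P = ∑ p : Pos e m, ∑ q : Pos e m,
      if posLt p q then min (L p) (L q) - P p else 0 := rfl
  rw [two_mul]
  nth_rewrite 1 [h1]
  rw [h2, ← Finset.sum_add_distrib]
  refine Finset.sum_congr rfl fun p _ => ?_
  rw [← Finset.sum_add_distrib]
  refine Finset.sum_congr rfl fun q _ => ?_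
  by_cases hpq : p = q
  · subst hpq
    have : ¬ posLt p p := by unfold posLt; omega
    simp [this]
  · rw [if_neg hpq]
    by_cases h : posLt p q
    · have h' : ¬ posLt q p := by unfold posLt at *; omega
      rw [if_pos h, if_neg h', min_eq_left (hP _ _ h), add_zero]
    · have h' : posLt q p := by
        by_contra h'
        apply hpq
        unfold posLt at *
        apply pos_ext <;> omega
      rw [if_neg h, if_pos h', min_eq_right (hP _ _ h'), zero_add, min_comm]

/-- The map from `d`-positions of the rotated symbol to `b`-positions. -/
def phi {e M : ℕ} (p : Pos e (wD M)) : Pos e (wB M) :=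
  if h : (p.1 : ℕ) + 1 < e then
    ⟨⟨(p.1 : ℕ) + 1, h⟩, ⟨(p.2 : ℕ), by have := p.2.2; simp [wB]; exact this⟩⟩
  else ⟨⟨0, by have := p.1.2; omega⟩, ⟨(p.2 : ℕ) + 1, by have := p.2.2; simp [wB]; exact this⟩⟩

theorem phi_fst {e M : ℕ} (p : Pos e (wD M)) :
    ((phi p).1 : ℕ) = if (p.1 : ℕ) + 1 < e then (p.1 : ℕ) + 1 else 0 := by
  unfold phi; split <;> rfl

theorem phi_snd {e M : ℕ} (p : Pos e (wD M)) :
    ((phi p).2 : ℕ) = if (p.1 : ℕ) + 1 < e then (p.2 : ℕ) else (p.2 : ℕ) + 1 := by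
  by_cases h : (p.1 : ℕ) + 1 < e
  · rw [phi, dif_pos h, if_pos h]
  · rw [phi, dif_neg h, if_neg h]

theorem phi_inj {e M : ℕ} : Function.Injective (phi : Pos e (wD M) → Pos e (wB M)) := by
  intro p q h
  have h1 := phi_fst p
  have h2 := phi_fst q
  have h3 := phi_snd p
  have h4 := phi_snd q
  rw [h] at h1 h3
  have := p.1.2
  have := q.1.2
  apply pos_ext
  · split_ifs at * <;> omega
  · split_ifs at * <;> omega

theorem not_range {e M : ℕ} (q : Pos e (wB M)) (hq : q ∉ Set.range (phi : Pos e (wD M) → Pos e (wB M))) :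
    (q.1 : ℕ) = 0 ∧ (q.2 : ℕ) = 0 := by
  by_contra hc
  apply hq
  obtain ⟨⟨i, hi⟩, ⟨j, hj⟩⟩ := q
  simp only at hc
  by_cases h0 : i = 0
  · subst h0
    simp [wB] at hj
    refine ⟨⟨⟨e - 1, by omega⟩, ⟨j - 1, by simp only [wD]; omega⟩⟩, ?_⟩
    apply pos_ext
    · rw [phi_fst]; simp only; split_ifs <;> omega
    · rw [phi_snd]; simp only; split_ifs <;> omega
  · simp [wB, h0] at hj
    refine ⟨⟨⟨i - 1, by omega⟩, ⟨j, by simp only [wD]; omega⟩⟩, ?_⟩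
    apply pos_ext
    · rw [phi_fst]; simp only; split_ifs <;> omega
    · rw [phi_snd]; simp only; split_ifs <;> omega

theorem proto_phi {e M : ℕ} (r : ℕ) (p : Pos e (wD M)) :
    proto r r (phi p) = proto r 0 p + r := by
  unfold proto
  rw [phi_snd, phi_fst]
  split_ifs <;> first | contradiction | omega | (push_cast; ring)

theorem symb_phi {e M : ℕ} (r : ℕ) (α : ℕ → ℕ → ℕ) (p : Pos e (wD M)) :
    symb α r r (phi p) = symb (rotIter e 1 α) r 0 p + r := by
  have hp := p.1.2
  unfold symb
  rw [proto_phi, ← add_assoc, phi_snd, phi_fst]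
  congr 3
  unfold rotIter
  rw [if_pos hp]
  by_cases h : (p.1 : ℕ) + 1 < e
  · simp [h, wB, wD, Nat.mod_eq_of_lt h]
  · have h' : (p.1 : ℕ) + 1 = e := by omega
    rw [if_neg h, if_neg h, h', Nat.mod_self]
    simp only [wB, wD, if_true]
    congr 1
    omega

theorem proto_nonneg {e : ℕ} {m : ℕ → ℕ} (r s : ℕ) (p : Pos e m) : 0 ≤ proto r s p := by
  unfold proto; split_ifs <;> positivity

theorem symb_nonneg {e : ℕ} {m : ℕ → ℕ} (r s : ℕ) (α : ℕ → ℕ → ℕ) (p : Pos e m) :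
    0 ≤ symb α r s p := by
  have := proto_nonneg r s p
  unfold symb; positivity

theorem protoD_mono {e : ℕ} {m : ℕ → ℕ} (r : ℕ) (p q : Pos e m) (h : posLt p q) :
    proto r 0 p ≤ proto r 0 q := by
  have h' : (p.2 : ℕ) ≤ q.2 := by unfold posLt at h; omega
  unfold proto
  simp
  gcongr

theorem protoB_mono {e : ℕ} {m : ℕ → ℕ} (r : ℕ) (p q : Pos e m) (h : posLt p q) :
    proto r r p ≤ proto r r q := by
  unfold posLt at h
  unfold proto
  have hr : (0 : ℤ) ≤ r := by positivity
  rcases h with h | ⟨h, h1, h2⟩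
  · have h3 : ((p.2 : ℕ) : ℤ) + 1 ≤ (q.2 : ℕ) := by exact_mod_cast h
    split_ifs <;> nlinarith
  · rw [h, if_neg h1]
    split_ifs <;> linarith

/-- For every `e`-multipartition `α` of `n` and every integer
`r ≥ 0`, `a^c(Λ^{r,r}_b(α)) = a^c(r(Λ^{r,0}_d(α)))`, where `r` denotes the rotation
of symbols.  (Since the protosymbol `Φ^{r,0}` of weight `d` has all rows equal, it
is invariant under rotation, so `a^c` of the rotated symbol is computed with
respect to the same protosymbol.) -/
theorem stmt_3 (e n M r : ℕ) (he : 1 ≤ e)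
    (α : ℕ → ℕ → ℕ)
    (hpart : ∀ i, Antitone (α i))
    (hsupp : ∀ i j, e ≤ i ∨ M ≤ j → α i j = 0)
    (hsum : (∑ i ∈ Finset.range e, ∑ j ∈ Finset.range M, α i j) = n) :
    ac (fun p : Pos e (wB M) => symb α r r p) (fun p => proto r r p) =
      ac (fun p : Pos e (wD M) => symb (rotIter e 1 α) r 0 p) (fun p => proto r 0 p) := by
  have key : 2 * ac (fun p : Pos e (wB M) => symb α r r p) (fun p => proto r r p) =
      2 * ac (fun p : Pos e (wD M) => symb (rotIter e 1 α) r 0 p) (fun p => proto r 0 p) := by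
    rw [two_ac _ _ (protoB_mono r), two_ac _ _ (protoD_mono r)]
    have hz : ∀ q : Pos e (wB M), q ∉ Set.range (phi : Pos e (wD M) → Pos e (wB M)) →
        symb α r r q = 0 ∧ proto r r q = 0 := by
      intro q hq
      obtain ⟨h1, h2⟩ := not_range q hq
      have h3 : proto r r q = 0 := by unfold proto; simp [h1, h2]
      refine ⟨?_, h3⟩
      unfold symb
      rw [h3, h2, h1, hsupp 0 _ (Or.inr (by simp [wB]))]
      rfl
    symm
    refine Fintype.sum_of_injective phi phi_inj _ _ ?_ ?_
    · intro q hq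
      obtain ⟨h1, h2⟩ := hz q hq
      refine Finset.sum_eq_zero fun p _ => ?_
      rw [h1, h2, min_eq_left (symb_nonneg _ _ _ _), min_eq_left (proto_nonneg _ _ _)]
      simp
    · intro p
      refine Fintype.sum_of_injective phi phi_inj _ _ ?_ ?_
      · intro q hq
        obtain ⟨h1, h2⟩ := hz q hq
        rw [h1, h2, min_eq_right (symb_nonneg _ _ _ _), min_eq_right (proto_nonneg _ _ _)]
        simp
      · intro q
        simp only [phi_inj.eq_iff, symb_phi, proto_phi, min_add_add_right]
        split_ifs
        · rfl
        · ring
  linarith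

end Spets
end

section
/- Let α be an e-multipartition of n and r ≥ s ≥ 0 integers. The symbol Λ^{r,s}_b(α) is distinguished if and only if for all nonnegative integers r′, r″, s′, s″ with 0 ≤ s′ ≤ r′, 0 ≤ s″ ≤ r″, r′ + r″ = r and s′ + s″ = s, there exist nonnegative integers n′, n″ with n′ + n″ = n and e-multipartitions β′ of n′ and β″ of n″ such that α = β′ + β″ and both Λ^{r′,s′}_b(β′) and Λ^{r″,s″}_b(β″) are distinguished. -/
namespace Spets

/-- Shape of the splitting function on one period. -/
def hh (s s' r' ρ : ℕ) : ℕ := min ρ s' + min (ρ - s) (r' - s')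

/-- The splitting function. -/
def ff (r s r' s' x : ℕ) : ℕ := x / r * r' + hh s s' r' (x % r)

section
variable {r s r' s' r'' s'' : ℕ}

theorem ff_form (h1 : s' ≤ r') (h2 : s'' ≤ r'') (h3 : r' + r'' = r)
    (h4 : s' + s'' = s) (k ρ : ℕ) (hρ : ρ ≤ r) :
    ff r s r' s' (k * r + ρ) = k * r' + hh s s' r' ρ := by
  rcases Nat.eq_zero_or_pos r with h0 | hpos
  · have : r' = 0 := by omega
    have : s' = 0 := by omega
    subst_vars
    simp [ff, hh]
  rcases hρ.lt_or_eq with h | h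
  · have e1 : (k * r + ρ) / r = k := by
      rw [Nat.div_eq_of_lt_le] <;> nlinarith
    have e2 : (k * r + ρ) % r = ρ := by
      rw [Nat.mul_add_mod', Nat.mod_eq_of_lt h]
    rw [ff, e1, e2]
  · have e0 : k * r + ρ = (k + 1) * r := by rw [h]; ring
    rw [ff, e0, Nat.mul_div_cancel _ hpos, Nat.mul_mod_left]
    have : hh s s' r' ρ = r' := by unfold hh; omega
    rw [this]
    have : hh s s' r' 0 = 0 := by unfold hh; omega
    rw [this]; ring

theorem ff_step (h1 : s' ≤ r') (h2 : s'' ≤ r'') (h3 : r' + r'' = r)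
    (h4 : s' + s'' = s) (x : ℕ) :
    ff r s r' s' x ≤ ff r s r' s' (x + 1) ∧ ff r s r' s' (x + 1) ≤ ff r s r' s' x + 1 := by
  rcases Nat.eq_zero_or_pos r with h0 | hpos
  · have : r' = 0 := by omega
    have : s' = 0 := by omega
    subst_vars
    simp [ff, hh]
  have hl := Nat.mod_lt x hpos
  have hx : x = x / r * r + x % r := (Nat.div_add_mod' x r).symm
  have e1 := ff_form h1 h2 h3 h4 (x / r) (x % r) hl.le
  have e2 := ff_form h1 h2 h3 h4 (x / r) (x % r + 1) hl
  rw [← add_assoc, ← hx] at e2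
  rw [← hx] at e1
  rw [e1, e2]
  unfold hh
  omega

theorem ff_mono (h1 : s' ≤ r') (h2 : s'' ≤ r'') (h3 : r' + r'' = r)
    (h4 : s' + s'' = s) {x y : ℕ} (hxy : x ≤ y) :
    ff r s r' s' x ≤ ff r s r' s' y ∧ ff r s r' s' y + x ≤ ff r s r' s' x + y := by
  induction y, hxy using Nat.le_induction with
  | base => simp
  | succ y hy ih =>
    have := ff_step h1 h2 h3 h4 y
    omega

theorem ff_add (h1 : s' ≤ r') (h2 : s'' ≤ r'') (h3 : r' + r'' = r)
    (h4 : s' + s'' = s) (k x : ℕ) :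
    ff r s r' s' (x + k * r) = ff r s r' s' x + k * r' := by
  rcases Nat.eq_zero_or_pos r with h0 | hpos
  · have hr : r' = 0 := by omega
    rw [h0, hr, mul_zero, add_zero, add_zero]
  · unfold ff
    rw [Nat.add_mul_div_right _ _ hpos, Nat.add_mul_mod_self_right]
    ring

theorem ff_zero (h1 : s' ≤ r') : ff r s r' s' 0 = 0 := by
  simp [ff, hh]

theorem ff_s (h1 : s' ≤ r') (h2 : s'' ≤ r'') (h3 : r' + r'' = r)
    (h4 : s' + s'' = s) : ff r s r' s' s = s' := by
  have := ff_form h1 h2 h3 h4 0 s (by omega)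
  simp only [zero_mul, zero_add] at this
  rw [this]; unfold hh; omega

end

/-- The protosymbol at the position of the `j`-th largest part of row `i`. -/
def ph (M r s i j : ℕ) : ℕ := (wB M i - 1 - j) * r + (if i = 0 then 0 else s)

theorem symb_eq (α : ℕ → ℕ → ℕ) (r s e M : ℕ) (p : Pos e (wB M)) :
    symb α r s p = ((α p.1 (wB M p.1 - 1 - p.2) + ph M r s p.1 (wB M p.1 - 1 - p.2) : ℕ) : ℤ) := by
  have h := p.2.2
  have : wB M p.1 - 1 - (wB M p.1 - 1 - (p.2 : ℕ)) = p.2 := by omega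
  unfold symb proto ph
  rw [this]
  push_cast
  rfl

theorem ff_ph {r s r' s' r'' s'' : ℕ} (h1 : s' ≤ r') (h2 : s'' ≤ r'') (h3 : r' + r'' = r)
    (h4 : s' + s'' = s) (M i j : ℕ) : ff r s r' s' (ph M r s i j) = ph M r' s' i j := by
  unfold ph
  rw [add_comm, ff_add h1 h2 h3 h4]
  split_ifs
  · rw [ff_zero h1]; ring
  · rw [ff_s h1 h2 h3 h4]; ring

theorem ph_add {r s r' s' r'' s'' : ℕ} (h3 : r' + r'' = r)
    (h4 : s' + s'' = s) (M i j : ℕ) : ph M r s i j = ph M r' s' i j + ph M r'' s'' i j := by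
  unfold ph
  subst h3 h4
  split_ifs <;> ring

theorem ph_shift (M i : ℕ) {j j' : ℕ} (h : j ≤ j') :
    ∃ k, ∀ r s, ph M r s i j = ph M r s i j' + k * r := by
  refine ⟨(wB M i - 1 - j) - (wB M i - 1 - j'), fun r s => ?_⟩
  unfold ph
  obtain ⟨k, hk⟩ : ∃ k, wB M i - 1 - j = (wB M i - 1 - j') + k :=
    Nat.exists_eq_add_of_le (by omega)
  rw [hk, Nat.add_sub_cancel_left]
  ring

/-- **Statement 12.** Let `α` be an `e`-multipartition of `n` and `r ≥ s ≥ 0`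
integers.  The symbol `Λ^{r,s}_b(α)` is distinguished if and only if for all
nonnegative integers `r′, r″, s′, s″` with `s′ ≤ r′`, `s″ ≤ r″`, `r′ + r″ = r` and
`s′ + s″ = s`, there exist `n′, n″` with `n′ + n″ = n` and `e`-multipartitions `β′`
of `n′` and `β″` of `n″` such that `α = β′ + β″` and both `Λ^{r′,s′}_b(β′)` and
`Λ^{r″,s″}_b(β″)` are distinguished. -/
theorem stmt_12 (e n M r s : ℕ) (he : 1 ≤ e) (hs : s ≤ r)
    (α : ℕ → ℕ → ℕ)
    (hpart : ∀ i, Antitone (α i))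
    (hsupp : ∀ i j, e ≤ i ∨ M ≤ j → α i j = 0)
    (hsum : (∑ i ∈ Finset.range e, ∑ j ∈ Finset.range M, α i j) = n) :
    Distinguished (fun p : Pos e (wB M) => symb α r s p) ↔
      ∀ r' s' r'' s'' : ℕ, s' ≤ r' → s'' ≤ r'' → r' + r'' = r → s' + s'' = s →
        ∃ (n' n'' : ℕ) (β' β'' : ℕ → ℕ → ℕ),
          n' + n'' = n ∧
          IsMP e n' M β' ∧ IsMP e n'' M β'' ∧
          (∀ i j, α i j = β' i j + β'' i j) ∧
          Distinguished (fun p : Pos e (wB M) => symb β' r' s' p) ∧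
          Distinguished (fun p : Pos e (wB M) => symb β'' r'' s'' p) := by
  constructor
  · intro hD r' s' r'' s'' h1 h2 h3 h4
    have key : ∀ i j, ph M r' s' i j ≤ ff r s r' s' (α i j + ph M r s i j) ∧
        ff r s r' s' (α i j + ph M r s i j) ≤ α i j + ph M r' s' i j := by
      intro i j
      have a := ff_mono h1 h2 h3 h4 (Nat.le_add_left (ph M r s i j) (α i j))
      rw [ff_ph h1 h2 h3 h4] at a
      omega
    obtain ⟨β', hβ'⟩ : ∃ β' : ℕ → ℕ → ℕ, ∀ i j,
        β' i j + ph M r' s' i j = ff r s r' s' (α i j + ph M r s i j) :=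
      ⟨fun i j => ff r s r' s' (α i j + ph M r s i j) - ph M r' s' i j,
        fun i j => Nat.sub_add_cancel (key i j).1⟩
    obtain ⟨β'', hβ''⟩ : ∃ β'' : ℕ → ℕ → ℕ, ∀ i j, α i j = β' i j + β'' i j :=
      ⟨fun i j => α i j - β' i j, fun i j => by
        have := key i j
        have := hβ' i j
        dsimp only
        omega⟩
    have anti : ∀ i j j', j ≤ j' → β' i j' ≤ β' i j ∧ β'' i j' ≤ β'' i j := by
      intro i j j' hj
      obtain ⟨k, hk⟩ := ph_shift M i hj
      have e1 := hβ' i j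
      have e2 := hβ' i j'
      have e3 := hβ'' i j
      have e4 := hβ'' i j'
      have e5 := ff_add h1 h2 h3 h4 k (α i j' + ph M r s i j')
      have hle : α i j' + ph M r s i j' + k * r ≤ α i j + ph M r s i j := by
        have := hpart i hj
        have := hk r s
        omega
      have e6 := ff_mono h1 h2 h3 h4 hle
      have e7 := hk r s
      have e8 := hk r' s'
      omega
    refine ⟨_, _, β', β'', ?_, ⟨fun i j j' hj => (anti i j j' hj).1, ?_, rfl⟩,
      ⟨fun i j j' hj => (anti i j j' hj).2, ?_, rfl⟩, hβ'', ?_, ?_⟩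
    · rw [← hsum]
      simp only [hβ'', Finset.sum_add_distrib]
    · intro i j h
      have := hsupp i j h
      have := hβ'' i j
      omega
    · intro i j h
      have := hsupp i j h
      have := hβ'' i j
      omega
    · intro p q hpq
      have h := hD p q hpq
      simp only [symb_eq, Nat.cast_le] at h ⊢
      rw [hβ', hβ']
      exact (ff_mono h1 h2 h3 h4 h).1
    · intro p q hpq
      have h := hD p q hpq
      simp only [symb_eq, Nat.cast_le] at h ⊢
      have a := (ff_mono h1 h2 h3 h4 h).2
      rw [← hβ', ← hβ'] at a
      have b1 := hβ'' p.1 (wB M p.1 - 1 - p.2)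
      have b2 := hβ'' q.1 (wB M q.1 - 1 - q.2)
      have c1 := ph_add h3 h4 M p.1 (wB M p.1 - 1 - p.2)
      have c2 := ph_add h3 h4 M q.1 (wB M q.1 - 1 - q.2)
      omega
  · intro H
    obtain ⟨n', n'', β', β'', -, -, -, hadd, d1, d2⟩ := H r s 0 0 hs le_rfl rfl rfl
    intro p q hpq
    have x := d1 p q hpq
    have y := d2 p q hpq
    simp only [symb_eq, Nat.cast_le, hadd] at x y ⊢
    simp only [ph, mul_zero, ite_self, add_zero] at x y ⊢
    omega

end Spets
end

section
/- Let e > 2, ζ a primitive e-th root of unity, K = ℚ(ζ), and let complex conjugation on K send ζ to ζ^{−1}. In GL₂(K) set s_i = the matrix with rows (0, ζ^i) and (ζ^{−i}, 0), let W = G(e,e,2) = ⟨s_0, s_1⟩, and for each divisor d of e set G(d,d,2) = ⟨s_0, s_{e/d}⟩ and, when e/d is even, G′(d,d,2) = ⟨s_1, s_{e/d+1}⟩. Let V₀ = { v₁e₁ − v̄₁e₂ : v₁ ∈ K } and L₀ = { v₁e₁ − v̄₁e₂ : v₁ ∈ ℤ_K }; both are W-stable, and for x ∈ V₀/L₀ let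 W^x_refl be the subgroup of W generated by the reflections of W fixing x. Then: G(d,d,2) is conjugate in W to some W^x_refl if and only if d = 1, d = e, or d is a prime power (dividing e); and, for e/d even, G′(d,d,2) is conjugate in W to some W^x_refl if and only if d = 1, or d < e/2 and d is a prime power. -/
namespace Spets

variable (K : Type) [Field K]

/-- The general linear group of `K²`. -/
abbrev GL2K := Matrix.GeneralLinearGroup (Fin 2) K

/-- The reflection matrix `s_i` with rows `(0, ζ^i)` and `(ζ^{−i}, 0)`. -/
noncomputable def sMat (ζ : K) (i : ℕ) : Matrix (Fin 2) (Fin 2) K :=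
  !![0, ζ ^ i; ζ⁻¹ ^ i, 0]

lemma sMat_mul_self (ζ : K) (hz : ζ ≠ 0) (i : ℕ) :
    sMat K ζ i * sMat K ζ i = 1 := by
  ext a b
  fin_cases a <;> fin_cases b <;>
    simp [sMat, Matrix.mul_apply, Fin.sum_univ_two, Matrix.one_apply,
      mul_inv_cancel₀ (pow_ne_zero i hz), inv_mul_cancel₀ (pow_ne_zero i hz)]

/-- The reflection `s_i` of `G(e,e,2)` as an element of `GL₂(K)`
(it is an involution). -/
noncomputable def sU (ζ : K) (hz : ζ ≠ 0) (i : ℕ) : GL2K K :=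
  ⟨sMat K ζ i, sMat K ζ i, sMat_mul_self K ζ hz i, sMat_mul_self K ζ hz i⟩

/-- `g` is a (pseudo-)reflection of `GL₂(K)`. -/
def IsRefl2 (g : GL2K K) : Prop :=
  g.val ≠ 1 ∧ Module.finrank K (LinearMap.range (g.val - 1).mulVecLin) = 1

/-- membership in the lattice `L₀ = { v₁e₁ − v̄₁e₂ : v₁ ∈ ℤ_K }`. -/
def memL0 (conj : K →+* K) (w : Fin 2 → K) : Prop :=
  w 0 ∈ integralClosure ℤ K ∧ w 1 = -conj (w 0)

end Spets

section ringlemmas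
open Polynomial

variable {R : Type*} [CommRing R] [IsDomain R]

lemma rl_unit {n : ℕ} {η : R} (hη : IsPrimitiveRoot η n) (h1 : n ≠ 1) (h0 : 0 < n)
    (hn : ¬ IsPrimePow n) : IsUnit (1 - η) := by
  have h := eval_one_cyclotomic_not_prime_pow (R := R) (n := n) (by
    intro p hp k hk
    rcases Nat.eq_zero_or_pos k with rfl | hk0
    · simp at hk; omega
    · exact hn ((isPrimePow_nat_iff _).2 ⟨p, k, hp, hk0, hk⟩))
  rw [cyclotomic_eq_prod_X_sub_primitiveRoots hη, eval_prod] at h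
  have hd : (1 - η) ∣ ∏ j ∈ primitiveRoots n R, eval 1 (X - C j) := by
    have := Finset.dvd_prod_of_mem (fun j => eval 1 (X - C j : R[X]))
      ((mem_primitiveRoots h0).2 hη)
    simpa using this
  rw [h] at hd
  exact isUnit_of_dvd_one hd

lemma rl_one_sub_dvd (x : R) (k : ℕ) : (1 - x) ∣ 1 - x ^ k := by
  simpa using sub_dvd_pow_sub_pow (1 : R) x k

lemma rl_nonunit {p k : ℕ} {η : R} (hp : p.Prime) (hpu : ¬ IsUnit (p : R)) (hk : 0 < k)
    (hη : IsPrimitiveRoot η (p ^ k)) : ¬ IsUnit (1 - η) := by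
  intro hu
  obtain ⟨k, rfl⟩ : ∃ j, k = j + 1 := ⟨k - 1, by omega⟩
  have := Fact.mk hp
  have h := eval_one_cyclotomic_prime_pow (R := R) (p := p) k
  rw [cyclotomic_eq_prod_X_sub_primitiveRoots hη, eval_prod] at h
  apply hpu
  rw [← h]
  rw [IsUnit.prod_iff]
  intro μ hμ
  have hμ' := (mem_primitiveRoots (pow_pos hp.pos _)).1 hμ
  simp only [eval_sub, eval_X, eval_C]
  have : NeZero (p ^ (k+1)) := ⟨(pow_pos hp.pos _).ne'⟩
  obtain ⟨i, _, rfl⟩ := hμ'.eq_pow_of_pow_eq_one hη.pow_eq_one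
  exact isUnit_of_dvd_unit (rl_one_sub_dvd μ i) hu

lemma rl_dvd_natCast {n : ℕ} {η : R} (h : η ^ n = 1) (h1 : η ≠ 1) : (1 - η) ∣ (n : R) := by
  have hg : ∑ i ∈ Finset.range n, η ^ i = 0 := by
    have := geom_sum_mul η n
    rw [h, sub_self] at this
    exact (mul_eq_zero.1 this).resolve_right (sub_ne_zero.2 h1)
  have : (n : R) = ∑ i ∈ Finset.range n, (1 - η ^ i) := by
    rw [Finset.sum_sub_distrib, hg]; simp
  rw [this]
  exact Finset.dvd_sum fun i _ => rl_one_sub_dvd η i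

lemma rl_pow_dvd {n p : ℕ} {η : R} (hp : 0 < p) (hn : 0 < n) (hpn : p ∣ n)
    (hη : IsPrimitiveRoot η (n * p)) : (1 - η) ^ p ∣ 1 - η ^ p := by
  have hω : IsPrimitiveRoot (η ^ n) p := hη.pow (Nat.mul_pos hn hp) rfl
  have h := hω.pow_sub_pow_eq_prod_sub_mul 1 η hp
  rw [one_pow] at h
  rw [h]
  have hc : (nthRootsFinset p (1:R)).card = p := hω.card_nthRootsFinset
  conv_lhs => rw [← hc]
  rw [← Finset.prod_const]
  apply Finset.prod_dvd_prod_of_dvd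
  intro μ hμ
  rw [mem_nthRootsFinset hp] at hμ
  have : NeZero p := ⟨hp.ne'⟩
  obtain ⟨i, _, rfl⟩ := hω.eq_pow_of_pow_eq_one hμ
  rw [← pow_mul, ← pow_succ]
  exact rl_one_sub_dvd _ _

/-- no divisibility, unit multiplier -/
lemma rl_main1 (hR : ∀ p : ℕ, p.Prime → ¬ IsUnit (p : R)) {d q : ℕ} (hd : IsPrimePow d)
    (hq : q.Prime) {η : R} (hη : IsPrimitiveRoot η (d * q)) :
    ¬ (1 - η ^ q) ∣ (1 - η) := by
  obtain ⟨p, k, hp, hk, rfl⟩ := (isPrimePow_nat_iff _).1 hd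
  have hpos : 0 < p ^ k * q := Nat.mul_pos (pow_pos hp.pos _) hq.pos
  have hηq : IsPrimitiveRoot (η ^ q) (p ^ k) := hη.pow hpos (mul_comm _ _)
  have hnu := rl_nonunit hp (hR p hp) hk hηq
  intro hdv
  by_cases hpq : q = p
  · subst hpq
    have hη' : IsPrimitiveRoot η (q ^ (k+1)) := by rwa [pow_succ]
    have hnu' := rl_nonunit hq (hR q hq) (Nat.succ_pos k) hη'
    have h2 := (rl_pow_dvd hp.pos (pow_pos hp.pos _) (dvd_pow_self _ hk.ne') hη).trans hdv
    have h3 : (1 - η) ≠ 0 := by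
      rw [sub_ne_zero]
      exact (hη'.ne_one (Nat.one_lt_pow (by omega) hq.one_lt)).symm
    have h4 : (1 - η) ^ 2 ∣ 1 - η := (pow_dvd_pow _ hq.two_le).trans h2
    apply hnu'
    apply isUnit_of_dvd_one
    rw [pow_two] at h4
    exact (mul_dvd_mul_iff_left h3).1 (by simpa using h4)
  · apply hnu
    refine isUnit_of_dvd_unit hdv (rl_unit hη ?_ hpos ?_)
    · have := hq.two_le
      have := Nat.pos_of_ne_zero (pow_ne_zero k hp.ne_zero)
      nlinarith
    · intro h
      obtain ⟨r, j, hr, hj, hrj⟩ := (isPrimePow_nat_iff _).1 h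
      have e1 : p ∣ r ^ j := hrj ▸ Dvd.dvd.mul_right (dvd_pow_self _ hk.ne') _
      have e2 : q ∣ r ^ j := hrj ▸ Dvd.intro_left _ rfl
      have e1' := (Nat.prime_dvd_prime_iff_eq hp hr).1 (hp.dvd_of_dvd_pow e1)
      have e2' := (Nat.prime_dvd_prime_iff_eq hq hr).1 (hq.dvd_of_dvd_pow e2)
      omega


lemma rl_form {e : ℕ} {z : R} (he : 2 < e) (hev : Even e) (hz : IsPrimitiveRoot z e)
    (hnu : ¬ IsUnit (1 + z)) : ∃ r k, r.Prime ∧ e = 2 * r ^ k := by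
  have h1 : (-z) ^ e = 1 := by rw [hev.neg_pow, hz.pow_eq_one]
  have hf := IsPrimitiveRoot.orderOf (-z)
  set f := orderOf (-z) with hfdef
  have hfe : f ∣ e := orderOf_dvd_of_pow_eq_one h1
  have hf0 : 0 < f := Nat.pos_of_dvd_of_pos hfe (by omega)
  have he2 : e ∣ f * 2 := by
    apply hz.dvd_of_pow_eq_one
    have : z ^ (f * 2) = ((-z) ^ f) ^ 2 := by
      rw [← pow_mul, mul_comm f 2, pow_mul, pow_mul, neg_pow_two]
    rw [this, hf.pow_eq_one, one_pow]
  have hf1 : f ≠ 1 := by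
    intro h; rw [h] at he2
    have := Nat.le_of_dvd (by norm_num) he2
    omega
  have hpp : IsPrimePow f := by
    by_contra hc
    apply hnu
    have := rl_unit hf hf1 hf0 hc
    simpa using this
  obtain ⟨r, k, hr, hk, hrk⟩ := (isPrimePow_nat_iff _).1 hpp
  obtain ⟨c, hc⟩ := hfe
  have hc2 : c ∣ 2 := by
    rw [hc] at he2
    exact Nat.dvd_of_mul_dvd_mul_left hf0 he2
  rcases (Nat.dvd_prime Nat.prime_two).1 hc2 with h | h
  · subst h
    have : 2 ∣ r ^ k := by rw [hrk]; have := hev.two_dvd; rwa [hc, mul_one] at this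
    have h2 := (Nat.prime_dvd_prime_iff_eq Nat.prime_two hr).1 (Nat.prime_two.dvd_of_dvd_pow this)
    refine ⟨2, k - 1, Nat.prime_two, ?_⟩
    rw [hc, mul_one, ← hrk, ← h2, ← pow_succ']
    congr 1; omega
  · exact ⟨r, k, hr, by rw [hc, h, hrk, mul_comm]⟩

lemma rl_main2 (hR : ∀ p : ℕ, p.Prime → ¬ IsUnit (p : R)) {e d m' n q : ℕ} (he : 2 < e)
    (hd : IsPrimePow d) (hm' : 2 ≤ m') (hed : e = d * (2 * m'))
    (hq : q.Prime) (hnq : 2 * m' = n * q) {z : R} (hz : IsPrimitiveRoot z e) :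
    ¬ (1 - z ^ (2 * m')) ∣ (1 + z) * (1 - z ^ n) := by
  have e0 : 0 < e := by omega
  have hη : IsPrimitiveRoot (z ^ n) (d * q) := hz.pow e0 (by rw [hed, hnq]; ring)
  have hηq : (z ^ n) ^ q = z ^ (2 * m') := by rw [← pow_mul, hnq]
  by_cases hu : IsUnit (1 + z)
  · rw [hu.dvd_mul_left, ← hηq]
    exact rl_main1 hR hd hq hη
  obtain ⟨r, k, hr, hek⟩ := rl_form he ⟨d * m', by rw [hed]; ring⟩ hz hu
  have hdm : d * m' = r ^ k := by
    have : 2 * (d * m') = 2 * r ^ k := by rw [← hek, hed]; ring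
    omega
  obtain ⟨a, -, rfl⟩ := (Nat.dvd_prime_pow hr).1 (Dvd.intro _ hdm)
  obtain ⟨b, -, rfl⟩ := (Nat.dvd_prime_pow hr).1 (Dvd.intro_left _ hdm)
  have ha : 0 < a := by
    rcases Nat.eq_zero_or_pos a with rfl | h
    · exact absurd hd (by simpa using not_isPrimePow_one)
    · exact h
  obtain ⟨b, rfl⟩ : ∃ j, b = j + 1 := by
    rcases Nat.eq_zero_or_pos b with rfl | h
    · simp at hm'
    · exact ⟨b - 1, by omega⟩
  intro hdv
  set θ := z ^ (2 * r ^ b) with hθd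
  have hθ : IsPrimitiveRoot θ (r ^ a * r) := hz.pow e0 (by rw [hed]; ring)
  have hθr : θ ^ r = z ^ (2 * r ^ (b + 1)) := by rw [hθd, ← pow_mul]; congr 1; ring
  have hnu := rl_nonunit hr (hR r hr) (Nat.succ_pos a) (η := θ) (by rwa [pow_succ])
  have hne : (1 - θ) ≠ 0 := by
    rw [sub_ne_zero]
    refine (hθ.ne_one ?_).symm
    rw [← pow_succ]; exact Nat.one_lt_pow (by omega) hr.one_lt
  have hpd := rl_pow_dvd hr.pos (pow_pos hr.pos a) (dvd_pow_self _ ha.ne') hθ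
  rw [hθr] at hpd
  have key : (1 - θ) ^ (r - 1) ∣ 1 + z := by
    have hrr : (1 - θ) ^ r = (1 - θ) ^ (r - 1) * (1 - θ) := by
      rw [← pow_succ]; congr 1; have := hr.pos; omega
    by_cases hqr : q = r
    · subst hqr
      have hn : n = 2 * q ^ b := by
        apply Nat.eq_of_mul_eq_mul_right hq.pos
        rw [← hnq]; ring
      rw [hn] at hdv
      have := hpd.trans hdv
      rw [hrr] at this
      exact (mul_dvd_mul_iff_right hne).1 this
    · have hun : IsUnit (1 - z ^ n) := by
        refine rl_unit hη ?_ ?_ ?_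
        · have := hq.two_le
          have := Nat.pos_of_ne_zero (pow_ne_zero a hr.ne_zero)
          nlinarith
        · exact Nat.mul_pos (pow_pos hr.pos _) hq.pos
        · intro h
          obtain ⟨s, j, hs, hj, hsj⟩ := (isPrimePow_nat_iff _).1 h
          have e1 : r ∣ s ^ j := hsj ▸ Dvd.dvd.mul_right (dvd_pow_self _ ha.ne') _
          have e2 : q ∣ s ^ j := hsj ▸ Dvd.intro_left _ rfl
          have e1' := (Nat.prime_dvd_prime_iff_eq hr hs).1 (hr.dvd_of_dvd_pow e1)
          have e2' := (Nat.prime_dvd_prime_iff_eq hq hs).1 (hq.dvd_of_dvd_pow e2)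
          omega
      rw [hun.dvd_mul_right] at hdv
      have := hpd.trans hdv
      rw [hrr] at this
      exact (Dvd.intro _ rfl).trans this
  rcases Nat.lt_or_ge 2 r with h2 | h2
  · have h3 : (1 + z) ∣ 1 - θ := by
      have := rl_one_sub_dvd (-z) (2 * r ^ b)
      rw [Even.neg_pow ⟨r ^ b, by ring⟩] at this
      simpa using this
    have h4 : (1 - θ) ^ 2 ∣ 1 - θ := (pow_dvd_pow _ (by omega)).trans (key.trans h3)
    apply hnu
    apply isUnit_of_dvd_one
    rw [pow_two] at h4
    exact (mul_dvd_mul_iff_left hne).1 (by simpa using h4)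
  · have : r = 2 := le_antisymm h2 hr.two_le
    subst this
    have h3 : (1 - z ^ 2) ∣ 1 - θ := by
      rw [hθd, pow_mul]; exact rl_one_sub_dvd _ _
    have h4 : (1 + z) * (1 - z) ∣ (1 + z) * 1 := by
      have : (1 + z) * (1 - z) = 1 - z ^ 2 := by ring
      rw [this, mul_one]
      simpa using h3.trans (by simpa using key)
    have hz1 : (1 + z) ≠ 0 := by
      intro h0
      have : z ^ 2 = 1 := by
        have : z = -1 := by linear_combination h0
        rw [this]; ring
      have := Nat.le_of_dvd (by norm_num) (hz.dvd_of_pow_eq_one 2 this)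
      omega
    have h5 := isUnit_of_dvd_one ((mul_dvd_mul_iff_left hz1).1 h4)
    refine rl_nonunit hr (hR 2 hr) (Nat.succ_pos k) ?_ h5
    rw [Nat.succ_eq_add_one, pow_succ', ← hek]; exact hz

/-- from natural-number exponents to integer exponents -/
lemma rl_zpow (u : Rˣ) (lam : R) (m : ℕ) (hm : 0 < m) (j : ℤ)
    (hno : ∀ n q : ℕ, q.Prime → m = n * q → ¬ (1 - (u : R) ^ m) ∣ lam * (1 - (u : R) ^ n)) :
    (1 - (u : R) ^ m) ∣ lam * (1 - ((u ^ j : Rˣ) : R)) ↔ (m : ℤ) ∣ j := by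
  have hgen : ∀ (x : ℤ) (t : ℤ), (1 - ((u ^ x : Rˣ) : R)) ∣ 1 - ((u ^ (x * t) : Rˣ) : R) := by
    intro x t
    obtain ⟨t, rfl | rfl⟩ := t.eq_nat_or_neg
    · have := rl_one_sub_dvd ((u ^ x : Rˣ) : R) t
      rw [zpow_mul]; simpa using this
    · have := rl_one_sub_dvd ((u ^ x : Rˣ) : R) t
      have h2 : 1 - ((u ^ (x * (-(t:ℤ))) : Rˣ) : R)
          = - ((u ^ (x * (-(t:ℤ))) : Rˣ) : R) * (1 - ((u ^ x : Rˣ) : R) ^ t) := by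
        have h3 : (u ^ (x * (-(t:ℤ))) : Rˣ) * (u ^ x) ^ t = 1 := by
          rw [← zpow_natCast, ← zpow_mul, ← zpow_add]; simp
        have h4 := congrArg (Units.val) h3
        push_cast at h4 ⊢
        linear_combination -h4
      rw [h2]; exact Dvd.dvd.mul_left this _
  have hm' : (u : R) ^ m = ((u ^ (m : ℤ) : Rˣ) : R) := by simp
  constructor
  · intro h
    by_contra hc
    set g := Int.gcd j m with hg
    have hgm : g ∣ m := by
      have := Int.gcd_dvd_right j m; exact_mod_cast this
    obtain ⟨c, hc'⟩ := hgm
    have hc1 : c ≠ 1 := by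
      rintro rfl
      apply hc
      have := Int.gcd_dvd_left j m
      rw [← hg] at this
      rwa [hc', mul_one]
    obtain ⟨q, hq, c', rfl⟩ := Nat.exists_prime_and_dvd hc1
    refine hno (g * c') q hq (by rw [hc']; ring) ?_
    have hgd : (1 - (u : R) ^ m) ∣ lam * (1 - ((u ^ (g : ℤ) : Rˣ) : R)) := by
      have hb := Int.gcd_eq_gcd_ab j m
      rw [← hg] at hb
      rw [hb, zpow_add]
      have e1 : lam * (1 - ((u ^ (j * Int.gcdA j m) * u ^ ((m : ℤ) * Int.gcdB j m) : Rˣ) : R))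
          = lam * (1 - ((u ^ (j * Int.gcdA j m) : Rˣ) : R)) + lam * ((u ^ (j * Int.gcdA j m) : Rˣ) : R)
            * (1 - ((u ^ ((m : ℤ) * Int.gcdB j m) : Rˣ) : R)) := by
        push_cast; ring
      rw [e1]
      refine dvd_add (h.trans (mul_dvd_mul_left _ (hgen _ _))) (Dvd.dvd.mul_left ?_ _)
      rw [hm']; exact hgen _ _
    refine hgd.trans (mul_dvd_mul_left _ ?_)
    have := hgen g c'
    rw [← Nat.cast_mul, zpow_natCast, zpow_natCast] at this
    simpa using this
  · rintro ⟨t, rfl⟩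
    rw [hm']
    exact Dvd.dvd.mul_left (hgen _ _) _

end ringlemmas

section ntlemmas

variable {K : Type} [Field K]

lemma nt_prime_nonunit [Algebra ℚ K] (p : ℕ) (hp : p.Prime) :
    ¬ IsUnit ((p : ℕ) : integralClosure ℤ K) := by
  intro h
  obtain ⟨y, hy⟩ := h.exists_right_inv
  have hy' : (p : K) * (y : K) = 1 := by
    have := congrArg (Subtype.val) hy
    simpa using this
  have hchar : CharZero K := algebraRat.charZero K
  have hp0 : (p : K) ≠ 0 := by exact_mod_cast hp.ne_zero
  have hyi : IsIntegral ℤ (y : K) := y.2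
  have hyr : (y : K) = algebraMap ℚ K ((p : ℚ)⁻¹) := by
    rw [map_inv₀, map_natCast]
    field_simp
    linear_combination hy'
  rw [hyr, isIntegral_algebraMap_iff (algebraMap ℚ K).injective] at hyi
  obtain ⟨n, hn⟩ := IsIntegrallyClosed.isIntegral_iff.1 hyi
  have hpq : (p : ℚ) ≠ 0 := by exact_mod_cast hp.ne_zero
  have : (p : ℤ) * n = 1 := by
    have h2 : (p : ℚ) * (n : ℚ) = 1 := by
      have : (n : ℚ) = (p : ℚ)⁻¹ := by simpa using hn
      rw [this]; field_simp
    exact_mod_cast h2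
  have h3 : (p : ℤ) ∣ 1 := Dvd.intro _ this
  have h4 : p ∣ 1 := by exact_mod_cast h3
  exact hp.one_lt.ne' (Nat.dvd_one.1 h4)

lemma nt_conj_mem (conj : K →+* K) {x : K} (hx : x ∈ integralClosure ℤ K) :
    conj x ∈ integralClosure ℤ K := by
  have hx' : IsIntegral ℤ x := hx
  exact hx'.map conj.toIntAlgHom

lemma nt_zeta_mem {e : ℕ} {ζ : K} (he : 2 < e) (hζ : ζ ^ e = 1) : ζ ∈ integralClosure ℤ K := by
  have : IsIntegral ℤ (ζ ^ e) := by rw [hζ]; exact isIntegral_one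
  exact this.of_pow (by omega)

lemma nt_unit {e : ℕ} {ζ : K} (he : 2 < e) (hζ : ζ ^ e = 1) :
    ∃ u : (integralClosure ℤ K)ˣ, ((u : integralClosure ℤ K) : K) = ζ := by
  let z : integralClosure ℤ K := ⟨ζ, nt_zeta_mem he hζ⟩
  have hz : z ^ e = 1 := Subtype.ext (by simpa [z] using hζ)
  exact ⟨Units.ofPowEqOne z e hz (by omega), rfl⟩

lemma nt_coe_zpow (u : (integralClosure ℤ K)ˣ) (i : ℤ) :
    (((u ^ i : (integralClosure ℤ K)ˣ) : integralClosure ℤ K) : K)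
      = ((u : integralClosure ℤ K) : K) ^ i := by
  have := map_zpow (Units.map ((integralClosure ℤ K).val : integralClosure ℤ K →* K)) u i
  have h2 := congrArg Units.val this
  rw [Units.val_zpow_eq_zpow_val] at h2
  exact h2

lemma nt_div {x y : integralClosure ℤ K} (hy : y ≠ 0) :
    ((x : K) / (y : K)) ∈ integralClosure ℤ K ↔ y ∣ x := by
  have hy' : (y : K) ≠ 0 := fun h => hy (Subtype.ext h)
  constructor
  · intro h
    refine ⟨⟨_, h⟩, Subtype.ext ?_⟩
    simp only [MulMemClass.coe_mul]
    field_simp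
  · rintro ⟨c, rfl⟩
    have : ((y * c : integralClosure ℤ K) : K) / (y : K) = c := by
      simp only [MulMemClass.coe_mul]
      field_simp
    rw [this]; exact c.2

lemma nt_zpow_mem {e : ℕ} {ζ : K} (he : 2 < e) (hζ : ζ ^ e = 1) (i : ℤ) :
    ζ ^ i ∈ integralClosure ℤ K := by
  obtain ⟨u, rfl⟩ := nt_unit he hζ
  rw [← nt_coe_zpow]; exact Subtype.property _

lemma nt_fwd1 {e d m : ℕ} {ζ : K} (he : 2 < e) (hζ : IsPrimitiveRoot ζ e)
    (conj : K →+* K) (hconj2 : ∀ x, conj (conj x) = x)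
    (hdm : e = d * m) (hd1 : d ≠ 1) (hpp : ¬ IsPrimePow d) (v : K) (a : ℤ)
    (h : ∀ i : ℤ, v + ζ ^ i * conj v ∈ integralClosure ℤ K ↔ (m : ℤ) ∣ i - a) : m = 1 := by
  have hd0 : 0 < d := Nat.pos_of_ne_zero (by rintro rfl; omega)
  have hz : ζ ≠ 0 := hζ.ne_zero (by omega)
  obtain ⟨u, hu⟩ := nt_unit he hζ.pow_eq_one
  have hup : IsPrimitiveRoot (u : integralClosure ℤ K) e := by
    rw [← hu] at hζ
    exact IsPrimitiveRoot.of_map_of_injective (f := (integralClosure ℤ K).val) hζ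
      Subtype.val_injective
  have hun := rl_unit (hup.pow (by omega) (a := m) (b := d) (by rw [hdm, mul_comm])) hd1 hd0 hpp
  obtain ⟨y, hy⟩ := hun.exists_left_inv
  have hyK : (y : K) * (1 - ζ ^ m) = 1 := by
    have := congrArg Subtype.val hy
    simpa [hu] using this
  have h1 := (h a).2 (by simp)
  have h2 := (h (a + m)).2 (by simp)
  have h3 := sub_mem h1 h2
  have h4 := mul_mem (mul_mem y.2 h3) (nt_zpow_mem he hζ.pow_eq_one (-a))
  have h5 : (y : K) * (v + ζ ^ a * conj v - (v + ζ ^ (a + (m:ℤ)) * conj v)) * ζ ^ (-a) = conj v := by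
    have e1 : ζ ^ a * ζ ^ (-a) = 1 := by rw [← zpow_add₀ hz]; simp
    rw [zpow_add₀ hz, zpow_natCast]
    linear_combination (y : K) * (1 - ζ ^ m) * conj v * e1 + conj v * hyK
  rw [h5] at h4
  have h6 := nt_conj_mem conj h4
  rw [hconj2] at h6
  have h7 := (h (a + 1)).1 (add_mem h6 (mul_mem (nt_zpow_mem he hζ.pow_eq_one _) h4))
  simp at h7
  have : m ∣ 1 := by exact_mod_cast h7
  exact Nat.dvd_one.1 this

lemma nt_conj_sub [Algebra ℚ K] {e : ℕ} {ζ : K} (he : 2 < e) (hζ : IsPrimitiveRoot ζ e)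
    (hgen : Algebra.adjoin ℚ {ζ} = ⊤)
    (conj : K →+* K) (hconj : conj ζ = ζ⁻¹) (b : K) (hb : b ∈ integralClosure ℤ K) :
    ∃ c ∈ integralClosure ℤ K, conj b = b + (ζ - ζ⁻¹) * c := by
  have hchar : CharZero K := algebraRat.charZero K
  have hne : NeZero e := ⟨by omega⟩
  have hz : ζ ≠ 0 := hζ.ne_zero (by omega)
  have hcyc : IsCyclotomicExtension {e} ℚ K := by
    rw [IsCyclotomicExtension.iff_singleton]
    refine ⟨⟨ζ, hζ⟩, fun x => ?_⟩
    have hx : x ∈ Algebra.adjoin ℚ {ζ} := by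
      have : x ∈ (⊤ : Subalgebra ℚ K) := trivial
      rwa [← hgen] at this
    refine Algebra.adjoin_mono ?_ hx
    simpa using hζ.pow_eq_one
  have hcyc' : @IsCyclotomicExtension {e} ℚ K _ _ DivisionRing.toRatAlgebra := by
    convert hcyc
    exact Subsingleton.elim _ _
  have hI := IsCyclotomicExtension.Rat.isIntegralClosure_adjoin_singleton (hcycl := hcyc') hζ
  obtain ⟨y, hy⟩ := hI.isIntegral_iff.1 (show IsIntegral ℤ b from hb)
  have hb' : b ∈ Algebra.adjoin ℤ {ζ} := by rw [← hy]; exact y.2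
  clear hy y hb
  have hzi := nt_zeta_mem he hζ.pow_eq_one
  have hsub : ∀ x ∈ Algebra.adjoin ℤ {ζ}, x ∈ integralClosure ℤ K := by
    intro x hx
    exact (Algebra.adjoin_le (S := integralClosure ℤ K) (by simpa using hzi)) hx
  induction hb' using Algebra.adjoin_induction with
  | mem x hx =>
    rw [Set.mem_singleton_iff] at hx
    subst hx
    exact ⟨-1, neg_mem (one_mem _), by rw [hconj]; ring⟩
  | algebraMap r => exact ⟨0, zero_mem _, by simp⟩
  | add x y hx hy ihx ihy =>
    obtain ⟨c, hc, h1⟩ := ihx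
    obtain ⟨c', hc', h2⟩ := ihy
    exact ⟨c + c', add_mem hc hc', by rw [map_add, h1, h2]; ring⟩
  | mul x y hx hy ihx ihy =>
    obtain ⟨c, hc, h1⟩ := ihx
    obtain ⟨c', hc', h2⟩ := ihy
    refine ⟨c * y + conj x * c', add_mem (mul_mem hc (hsub _ hy)) (mul_mem
      (nt_conj_mem conj (hsub _ hx)) hc'), ?_⟩
    rw [map_mul, h2]
    linear_combination y * h1

lemma nt_fwd2 [Algebra ℚ K] {e : ℕ} {ζ : K} (he : 2 < e) (hζ : IsPrimitiveRoot ζ e)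
    (hgen : Algebra.adjoin ℚ {ζ} = ⊤)
    (conj : K →+* K) (hconj : conj ζ = ζ⁻¹) (hconj2 : ∀ x, conj (conj x) = x)
    (v : K) (a : ℤ) (ha : ¬ (2 : ℤ) ∣ a)
    (h : ∀ i : ℤ, v + ζ ^ i * conj v ∈ integralClosure ℤ K ↔ (2 : ℤ) ∣ i - a) : False := by
  have hz : ζ ≠ 0 := hζ.ne_zero (by omega)
  have h1 := (h 1).2 (by omega)
  have hm1 := (h (-1)).2 (by omega)
  rw [zpow_neg_one] at hm1
  rw [zpow_one] at h1
  have hzi := nt_zeta_mem he hζ.pow_eq_one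
  have hzi' : ζ⁻¹ ∈ integralClosure ℤ K := by
    have := nt_zpow_mem he hζ.pow_eq_one (-1); rwa [zpow_neg_one] at this
  have hconj' : conj ζ⁻¹ = ζ := by rw [← hconj, hconj2]
  have hb : (1 - ζ ^ 2) * v ∈ integralClosure ℤ K := by
    have hs := sub_mem hm1 h1
    have hc := nt_conj_mem conj hs
    have := mul_mem hzi hc
    have e1 : ζ * conj (v + ζ⁻¹ * conj v - (v + ζ * conj v)) = -((1 - ζ ^ 2) * v) := by
      simp only [map_sub, map_add, map_mul, hconj2, hconj, hconj']
      field_simp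
      ring
    rw [e1] at this
    simpa using neg_mem this
  obtain ⟨c, hc, hbc⟩ := nt_conj_sub he hζ hgen conj hconj _ hb
  have hne : (1 - ζ ^ 2) ≠ 0 := by
    intro h0
    have : ζ ^ 2 = 1 := by linear_combination -h0
    have := Nat.le_of_dvd (by norm_num) (hζ.dvd_of_pow_eq_one 2 this)
    omega
  simp only [map_sub, map_mul, map_one, map_pow, hconj] at hbc
  have hv : (1 - ζ) * v = (v + ζ⁻¹ * conj v) - c := by
    apply mul_left_cancel₀ hne
    have hi : ζ * ζ⁻¹ = 1 := mul_inv_cancel₀ hz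
    linear_combination ζ * hbc + ((ζ + ζ⁻¹) * conj v - c) * hi
  have hv' : (1 - ζ) * v ∈ integralClosure ℤ K := by rw [hv]; exact sub_mem hm1 hc
  have hcv := nt_conj_mem conj hv'
  simp only [map_sub, map_mul, map_one, hconj] at hcv
  have h0 := (h 0).1 (by
    have := add_mem hm1 hcv
    convert this using 1
    simp; ring)
  omega

lemma nt_prim_unit {e : ℕ} {u : (integralClosure ℤ K)ˣ}
    (hζ : IsPrimitiveRoot ((u : integralClosure ℤ K) : K) e) :
    IsPrimitiveRoot (u : integralClosure ℤ K) e :=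
  IsPrimitiveRoot.of_map_of_injective (f := (integralClosure ℤ K).val) hζ
      Subtype.val_injective

lemma nt_d1_aux [Algebra ℚ K] {e : ℕ} {ζ : K} (he : 2 < e) (hζ : IsPrimitiveRoot ζ e)
    (k : ℕ) (hk : ζ ^ k ≠ 1) (j : ℤ) :
    (1 - ζ ^ k) * (1 - ζ ^ j) / (2 * (e:K) ^ 2) ∈ integralClosure ℤ K ↔ (e : ℤ) ∣ j := by
  have hchar : CharZero K := algebraRat.charZero K
  obtain ⟨u, rfl⟩ := nt_unit he hζ.pow_eq_one
  have hup := nt_prim_unit hζ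
  have hN : (2 * (e : integralClosure ℤ K) ^ 2) ≠ 0 := by
    intro h
    have := congrArg Subtype.val h
    push_cast at this
    have h2 : (2 * (e:K)^2) ≠ 0 := by
      have : (e : K) ≠ 0 := by exact_mod_cast (by omega : e ≠ 0)
      exact mul_ne_zero two_ne_zero (pow_ne_zero 2 this)
    exact h2 (by simpa using this)
  have hx : (1 - ((u : integralClosure ℤ K) : K) ^ k) * (1 - ((u : integralClosure ℤ K) : K) ^ j) / (2 * (e:K) ^ 2)
      = (((1 - (u:integralClosure ℤ K) ^ k) * (1 - ((u ^ j : (integralClosure ℤ K)ˣ) : integralClosure ℤ K)) : integralClosure ℤ K) : K) / ((2 * (e : integralClosure ℤ K) ^ 2 : integralClosure ℤ K) : K) := by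
    push_cast
    rw [← nt_coe_zpow]
    rfl
  rw [hx, nt_div hN]
  have hju : (u ^ j = 1) ↔ (e : ℤ) ∣ j := by
    exact (IsPrimitiveRoot.coe_units_iff.1 hup).zpow_eq_one_iff_dvd j
  rw [← hju]
  constructor
  · intro h
    by_contra hc
    have h1 : (1 - (u:integralClosure ℤ K) ^ k) ∣ (e : integralClosure ℤ K) := by
      apply rl_dvd_natCast
      · rw [← pow_mul, mul_comm, pow_mul, hup.pow_eq_one, one_pow]
      · intro h0
        apply hk
        have := congrArg Subtype.val h0
        simpa using this
    have h2 : (1 - ((u ^ j : (integralClosure ℤ K)ˣ) : integralClosure ℤ K)) ∣ (e : integralClosure ℤ K) := by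
      apply rl_dvd_natCast
      · have : (u ^ j) ^ e = 1 := by
          rw [← zpow_natCast, ← zpow_mul, mul_comm, zpow_mul, zpow_natCast,
            (IsPrimitiveRoot.coe_units_iff.1 hup).pow_eq_one, one_zpow]
        rw [← Units.val_pow_eq_pow_val, this, Units.val_one]
      · intro h0
        exact hc (Units.ext h0)
    have h3 := h.trans (mul_dvd_mul h1 h2)
    rw [← pow_two] at h3
    have he0 : (e : integralClosure ℤ K) ^ 2 ≠ 0 := right_ne_zero_of_mul hN
    have h4 : (2 : integralClosure ℤ K) ∣ 1 := (mul_dvd_mul_iff_right he0).1 (by simpa using h3)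
    exact nt_prime_nonunit (K := K) 2 Nat.prime_two (by exact_mod_cast isUnit_of_dvd_one h4)
  · intro h
    rw [h]; simp

lemma nt_pow_ne {e : ℕ} {ζ : K} (hζ : IsPrimitiveRoot ζ e) {k : ℕ} (h0 : 0 < k) (h : k < e) :
    ζ ^ k ≠ 1 := hζ.pow_ne_one_of_pos_of_lt (by omega) h

lemma nt_back_d1_0 [Algebra ℚ K] {e : ℕ} {ζ : K} (he : 2 < e) (hζ : IsPrimitiveRoot ζ e)
    (conj : K →+* K) (hconj : conj ζ = ζ⁻¹) :
    ∃ v : K, ∀ i : ℤ, v + ζ ^ i * conj v ∈ integralClosure ℤ K ↔ (e : ℤ) ∣ i - 0 := by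
  have hz : ζ ≠ 0 := hζ.ne_zero (by omega)
  have hzi := nt_zeta_mem he hζ.pow_eq_one
  have hzi' : ζ⁻¹ ∈ integralClosure ℤ K := by
    have := nt_zpow_mem he hζ.pow_eq_one (-1); rwa [zpow_neg_one] at this
  refine ⟨(ζ - ζ⁻¹) / (2 * (e:K) ^ 2), fun i => ?_⟩
  rw [← nt_d1_aux he hζ 2 (nt_pow_ne hζ (by omega) he)]
  have e1 : (ζ - ζ⁻¹) / (2 * (e:K) ^ 2) + ζ ^ i * conj ((ζ - ζ⁻¹) / (2 * (e:K) ^ 2))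
     = - ζ⁻¹ * ((1 - ζ ^ 2) * (1 - ζ ^ (i - 0)) / (2 * (e:K) ^ 2)) := by
    simp only [map_div₀, map_sub, map_mul, map_pow, map_inv₀, hconj, map_natCast, inv_inv,
      map_ofNat, sub_zero, div_eq_mul_inv]
    have hi : ζ * ζ⁻¹ = 1 := mul_inv_cancel₀ hz
    linear_combination (-(ζ ^ (1:ℕ)) * (1 - ζ ^ i) * (2 * (e:K)^2)⁻¹) * hi
  rw [e1]
  constructor
  · intro h
    have := mul_mem (neg_mem hzi) h
    convert this using 1
    field_simp
  · intro h
    exact mul_mem (neg_mem hzi') h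

lemma nt_back_d1_1 [Algebra ℚ K] {e : ℕ} {ζ : K} (he : 2 < e) (hζ : IsPrimitiveRoot ζ e)
    (conj : K →+* K) (hconj : conj ζ = ζ⁻¹) :
    ∃ v : K, ∀ i : ℤ, v + ζ ^ i * conj v ∈ integralClosure ℤ K ↔ (e : ℤ) ∣ i - 1 := by
  have hz : ζ ≠ 0 := hζ.ne_zero (by omega)
  refine ⟨(1 - ζ) / (2 * (e:K) ^ 2), fun i => ?_⟩
  rw [← nt_d1_aux he hζ 1 (nt_pow_ne hζ (by omega) (by omega))]
  have e1 : (1 - ζ) / (2 * (e:K) ^ 2) + ζ ^ i * conj ((1 - ζ) / (2 * (e:K) ^ 2))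
     = ((1 - ζ ^ 1) * (1 - ζ ^ (i - 1)) / (2 * (e:K) ^ 2)) := by
    simp only [map_div₀, map_sub, map_mul, map_pow, map_one, map_inv₀, hconj, map_natCast,
      map_ofNat, div_eq_mul_inv, pow_one]
    rw [zpow_sub_one₀ hz]
    have hi : ζ * ζ⁻¹ = 1 := mul_inv_cancel₀ hz
    linear_combination (-(ζ ^ i) * (2 * (e:K)^2)⁻¹) * hi
  rw [e1]

lemma nt_pp_aux {e d m : ℕ} {ζ : K} (he : 2 < e) (hζ : IsPrimitiveRoot ζ e)
    (hdm : e = d * m) (hd : 1 < d) (conj : K →+* K) (hconj : conj ζ = ζ⁻¹)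
    (lam : integralClosure ℤ K) (a : ℤ) (hlam : ζ ^ a * conj lam = lam)
    (hno : ∀ u : (integralClosure ℤ K)ˣ, ((u : integralClosure ℤ K) : K) = ζ →
      ∀ n q : ℕ, q.Prime → m = n * q → ¬ (1 - (u : integralClosure ℤ K) ^ m) ∣
        lam * (1 - (u : integralClosure ℤ K) ^ n)) :
    ∃ v : K, ∀ i : ℤ, v + ζ ^ i * conj v ∈ integralClosure ℤ K ↔ (m : ℤ) ∣ i - a := by
  have hz : ζ ≠ 0 := hζ.ne_zero (by omega)
  have hm0 : 0 < m := Nat.pos_of_ne_zero (by rintro rfl; omega)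
  obtain ⟨u, hu⟩ := nt_unit he hζ.pow_eq_one
  have hne : (1 - ζ ^ m) ≠ 0 := by
    rw [sub_ne_zero]
    refine (nt_pow_ne hζ hm0 ?_).symm
    rw [hdm]; nlinarith
  have hne' : (1 - (u : integralClosure ℤ K) ^ m) ≠ 0 := by
    intro h
    apply hne
    have := congrArg Subtype.val h
    simpa [hu] using this
  refine ⟨(lam : K) / (1 - ζ ^ m), fun i => ?_⟩
  have e1 : (lam : K) / (1 - ζ ^ m) + ζ ^ i * conj ((lam : K) / (1 - ζ ^ m))
      = ((lam * (1 - ((u ^ (i - a + m) : (integralClosure ℤ K)ˣ) : integralClosure ℤ K)) :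
          integralClosure ℤ K) : K) /
        ((1 - (u : integralClosure ℤ K) ^ m : integralClosure ℤ K) : K) := by
    push_cast
    rw [nt_coe_zpow, hu]
    simp only [map_div₀, map_sub, map_pow, map_one, hconj]
    have hcl : conj (lam : K) = ζ ^ (-a) * lam := by
      have : ζ ^ a * ζ ^ (-a) = 1 := by rw [← zpow_add₀ hz]; simp
      linear_combination ζ ^ (-a) * hlam - conj (lam : K) * this
    have hne2 : (1 - ζ⁻¹ ^ m) ≠ 0 := by
      intro h
      apply hne
      have : ζ ^ m * ζ⁻¹ ^ m = 1 := by rw [← mul_pow, mul_inv_cancel₀ hz, one_pow]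
      linear_combination (-ζ ^ m) * h - this
    have h3 : ((1 - ζ⁻¹ ^ m))⁻¹ = - ζ ^ m * (1 - ζ ^ m)⁻¹ := by
      have : ζ ^ m * ζ⁻¹ ^ m = 1 := by rw [← mul_pow, mul_inv_cancel₀ hz, one_pow]
      rw [inv_eq_iff_eq_inv, mul_inv, inv_inv, ← neg_inv, ← inv_pow]
      linear_combination -this
    rw [div_eq_mul_inv (conj (lam : K)), h3, hcl, zpow_add₀ hz, zpow_sub₀ hz, zpow_neg, zpow_natCast]
    field_simp
    ring
  rw [e1, nt_div hne', rl_zpow u lam m hm0 _ (hno u hu)]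
  exact dvd_add_self_right

lemma nt_back_pp_0 [Algebra ℚ K] {e d m : ℕ} {ζ : K} (he : 2 < e) (hζ : IsPrimitiveRoot ζ e)
    (hdm : e = d * m) (hd : IsPrimePow d) (conj : K →+* K) (hconj : conj ζ = ζ⁻¹) :
    ∃ v : K, ∀ i : ℤ, v + ζ ^ i * conj v ∈ integralClosure ℤ K ↔ (m : ℤ) ∣ i - 0 := by
  refine nt_pp_aux he hζ hdm hd.one_lt conj hconj 1 0 (by simp) ?_
  rintro u rfl n q hq hm
  have hup := nt_prim_unit hζ
  rw [one_mul]
  have := rl_main1 (nt_prime_nonunit (K := K)) hd hq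
    (hup.pow (a := n) (b := d * q) (by omega) (by rw [hdm, hm]; ring))
  rwa [← pow_mul, ← hm] at this

lemma nt_back_pp_1 [Algebra ℚ K] {e d m : ℕ} {ζ : K} (he : 2 < e) (hζ : IsPrimitiveRoot ζ e)
    (hdm : e = d * m) (hm : Even m) (hm2 : 2 < m) (hd : IsPrimePow d) (conj : K →+* K)
    (hconj : conj ζ = ζ⁻¹) :
    ∃ v : K, ∀ i : ℤ, v + ζ ^ i * conj v ∈ integralClosure ℤ K ↔ (m : ℤ) ∣ i - 1 := by
  have hz : ζ ≠ 0 := hζ.ne_zero (by omega)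
  refine nt_pp_aux he hζ hdm hd.one_lt conj hconj
    (1 + ⟨ζ, nt_zeta_mem he hζ.pow_eq_one⟩) 1 ?_ ?_
  · push_cast
    rw [map_add, map_one, hconj, zpow_one, mul_add, mul_one, mul_inv_cancel₀ hz, add_comm]
  rintro u rfl n q hq hm'
  have hup := nt_prim_unit hζ
  obtain ⟨c, rfl⟩ := hm
  rw [← two_mul] at *
  exact rl_main2 (nt_prime_nonunit (K := K)) he hd (by omega) hdm hq hm' hup

end ntlemmas

namespace Spets

section grouplemmas

variable {K : Type} [Field K]

/-- reflection with integer index -/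
noncomputable def sZ (ζ : K) (hz : ζ ≠ 0) (i : ℤ) : GL2K K :=
  ⟨!![0, ζ ^ i; ζ ^ (-i), 0], !![0, ζ ^ i; ζ ^ (-i), 0],
    by ext a b; fin_cases a <;> fin_cases b <;>
        simp [Matrix.mul_apply, Fin.sum_univ_two, zpow_ne_zero i hz],
    by ext a b; fin_cases a <;> fin_cases b <;>
        simp [Matrix.mul_apply, Fin.sum_univ_two, zpow_ne_zero i hz]⟩

/-- rotation with integer index -/
noncomputable def rZ (ζ : K) (hz : ζ ≠ 0) (i : ℤ) : GL2K K :=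
  ⟨!![ζ ^ i, 0; 0, ζ ^ (-i)], !![ζ ^ (-i), 0; 0, ζ ^ i],
    by ext a b; fin_cases a <;> fin_cases b <;>
        simp [Matrix.mul_apply, Fin.sum_univ_two, zpow_ne_zero i hz],
    by ext a b; fin_cases a <;> fin_cases b <;>
        simp [Matrix.mul_apply, Fin.sum_univ_two, zpow_ne_zero i hz]⟩

variable (ζ : K) (hz : ζ ≠ 0)

lemma sU_eq (i : ℕ) : sU K ζ hz i = sZ ζ hz i := by
  apply Units.ext
  simp [sU, sZ, sMat]

lemma ss (i j : ℤ) : sZ ζ hz i * sZ ζ hz j = rZ ζ hz (i - j) := by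
  apply Units.ext
  ext a b; fin_cases a <;> fin_cases b <;>
    simp [sZ, rZ, Matrix.mul_apply, Fin.sum_univ_two, ← zpow_add₀ hz, -zpow_neg] <;> ring_nf

lemma sr (i j : ℤ) : sZ ζ hz i * rZ ζ hz j = sZ ζ hz (i - j) := by
  apply Units.ext
  ext a b; fin_cases a <;> fin_cases b <;>
    simp [sZ, rZ, Matrix.mul_apply, Fin.sum_univ_two, ← zpow_add₀ hz, -zpow_neg] <;> ring_nf

lemma rs (i j : ℤ) : rZ ζ hz i * sZ ζ hz j = sZ ζ hz (i + j) := by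
  apply Units.ext
  ext a b; fin_cases a <;> fin_cases b <;>
    simp [sZ, rZ, Matrix.mul_apply, Fin.sum_univ_two, ← zpow_add₀ hz, -zpow_neg] <;> ring_nf

lemma rr (i j : ℤ) : rZ ζ hz i * rZ ζ hz j = rZ ζ hz (i + j) := by
  apply Units.ext
  ext a b; fin_cases a <;> fin_cases b <;>
    simp [rZ, Matrix.mul_apply, Fin.sum_univ_two, ← zpow_add₀ hz, -zpow_neg] <;> ring_nf

lemma r0 : rZ ζ hz 0 = 1 := by
  apply Units.ext
  ext a b; fin_cases a <;> fin_cases b <;> simp [rZ]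

lemma s_inv (i : ℤ) : (sZ ζ hz i)⁻¹ = sZ ζ hz i := by
  apply inv_eq_of_mul_eq_one_right
  rw [ss, sub_self, r0]

lemma r_inv (i : ℤ) : (rZ ζ hz i)⁻¹ = rZ ζ hz (-i) := by
  apply inv_eq_of_mul_eq_one_right
  rw [rr, add_neg_cancel, r0]

/-- the dihedral subgroup -/
noncomputable def DH (a m : ℤ) : Subgroup (GL2K K) where
  carrier := {g | (∃ i, m ∣ i - a ∧ g = sZ ζ hz i) ∨ (∃ i, m ∣ i ∧ g = rZ ζ hz i)}
  one_mem' := Or.inr ⟨0, by simp, (r0 ζ hz).symm⟩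
  mul_mem' := by
    rintro x y (⟨i, hi, rfl⟩ | ⟨i, hi, rfl⟩) (⟨j, hj, rfl⟩ | ⟨j, hj, rfl⟩)
    · exact Or.inr ⟨_, by simpa using dvd_sub hi hj, ss ζ hz _ _⟩
    · exact Or.inl ⟨i - j, by rw [show i - j - a = (i - a) - j by ring]; exact dvd_sub hi hj, sr ζ hz _ _⟩
    · exact Or.inl ⟨i + j, by rw [show i + j - a = i + (j - a) by ring]; exact dvd_add hi hj, rs ζ hz _ _⟩
    · exact Or.inr ⟨_, dvd_add hi hj, rr ζ hz _ _⟩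
  inv_mem' := by
    rintro x (⟨i, hi, rfl⟩ | ⟨i, hi, rfl⟩)
    · exact Or.inl ⟨i, hi, s_inv ζ hz i⟩
    · exact Or.inr ⟨-i, by simpa using hi, r_inv ζ hz i⟩

lemma mem_DH (a m : ℤ) (g : GL2K K) : g ∈ DH ζ hz a m ↔
    (∃ i, m ∣ i - a ∧ g = sZ ζ hz i) ∨ (∃ i, m ∣ i ∧ g = rZ ζ hz i) := Iff.rfl

lemma DH_le (a m : ℤ) (H : Subgroup (GL2K K)) (h1 : sZ ζ hz a ∈ H) (h2 : sZ ζ hz (a + m) ∈ H) :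
    DH ζ hz a m ≤ H := by
  have hr : rZ ζ hz m ∈ H := by
    have := H.mul_mem h2 h1
    rwa [ss, add_sub_cancel_left] at this
  have hrn : ∀ t : ℕ, rZ ζ hz (m * t) ∈ H := by
    intro t
    induction t with
    | zero => simpa [r0] using H.one_mem
    | succ t ih =>
      have := H.mul_mem ih hr
      rw [rr] at this
      push_cast; rwa [mul_add, mul_one]
  have hrz : ∀ t : ℤ, rZ ζ hz (m * t) ∈ H := by
    intro t
    obtain ⟨t, rfl | rfl⟩ := t.eq_nat_or_neg
    · exact hrn t
    · have := H.inv_mem (hrn t)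
      rw [r_inv] at this
      rwa [mul_neg]
  rintro g (⟨i, ⟨t, ht⟩, rfl⟩ | ⟨i, ⟨t, rfl⟩, rfl⟩)
  · have := H.mul_mem (hrz t) h1
    rw [rs, ← ht] at this
    simpa using this
  · exact hrz t

lemma closure_pair (a m : ℤ) :
    Subgroup.closure {sZ ζ hz a, sZ ζ hz (a + m)} = DH ζ hz a m := by
  apply le_antisymm
  · rw [Subgroup.closure_le]
    rintro g (rfl | rfl)
    · exact Or.inl ⟨a, by simp, rfl⟩
    · exact Or.inl ⟨a + m, by simp, rfl⟩
  · exact DH_le ζ hz a m _ (Subgroup.subset_closure (by simp)) (Subgroup.subset_closure (by simp))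

lemma sZ_inj {e : ℕ} (hζ : IsPrimitiveRoot ζ e) {i j : ℤ} (h : sZ ζ hz i = sZ ζ hz j) :
    (e : ℤ) ∣ i - j := by
  have := congrArg (fun g : GL2K K => g.val 0 1) h
  simp [sZ] at this
  rw [← hζ.zpow_eq_one_iff_dvd, zpow_sub₀ hz, this, div_self (zpow_ne_zero _ hz)]

lemma sZ_ne_rZ (i j : ℤ) : sZ ζ hz i ≠ rZ ζ hz j := by
  intro h
  have := congrArg (fun g : GL2K K => g.val 0 0) h
  simp [sZ, rZ] at this
  exact zpow_ne_zero j hz this.symm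

lemma s_mem_DH {e : ℕ} (hζ : IsPrimitiveRoot ζ e) (a m : ℤ) (hm : m ∣ e) (i : ℤ) :
    sZ ζ hz i ∈ DH ζ hz a m ↔ m ∣ i - a := by
  constructor
  · rintro (⟨j, hj, h⟩ | ⟨j, hj, h⟩)
    · have := dvd_add (hm.trans (sZ_inj ζ hz hζ h)) hj
      simpa using this
    · exact absurd h (sZ_ne_rZ ζ hz i j)
  · intro h
    exact Or.inl ⟨i, h, rfl⟩

lemma refl_s (i : ℤ) : IsRefl2 K (sZ ζ hz i) := by
  have hv : ∀ x : Fin 2 → K, ((sZ ζ hz i).val - 1).mulVecLin x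
      = (x 1 - ζ ^ (-i) * x 0) • ![ζ ^ i, -1] := by
    intro x
    have : ζ ^ i * ζ ^ (-i) = 1 := by rw [← zpow_add₀ hz]; simp
    ext k
    fin_cases k
    · simp [sZ, Matrix.mulVec, dotProduct, Fin.sum_univ_two, -zpow_neg]
      linear_combination x 0 * this
    · simp [sZ, Matrix.mulVec, dotProduct, Fin.sum_univ_two, -zpow_neg]
  constructor
  · intro h
    have := congrFun (congrFun h 0) 0
    simp [sZ] at this
  · have : LinearMap.range ((sZ ζ hz i).val - 1).mulVecLin = Submodule.span K {![ζ ^ i, -1]} := by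
      ext y
      rw [LinearMap.mem_range, Submodule.mem_span_singleton]
      constructor
      · rintro ⟨x, rfl⟩
        exact ⟨_, (hv x).symm⟩
      · rintro ⟨c, rfl⟩
        refine ⟨![0, c], ?_⟩
        rw [hv]; simp
    rw [this]
    apply finrank_span_singleton
    intro h
    have := congrFun h 1
    simp at this

lemma not_refl_r (i : ℤ) : ¬ IsRefl2 K (rZ ζ hz i) := by
  rintro ⟨h1, h2⟩
  by_cases h : ζ ^ i = 1
  · apply h1
    ext a b; fin_cases a <;> fin_cases b <;> simp [rZ, h]
  · have hi : (ζ ^ i - 1) ≠ 0 := sub_ne_zero.2 h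
    have hi' : (ζ ^ (-i) - 1) ≠ 0 := by
      rw [sub_ne_zero, zpow_neg]; simpa using h
    have : LinearMap.range ((rZ ζ hz i).val - 1).mulVecLin = ⊤ := by
      rw [LinearMap.range_eq_top]
      intro y
      refine ⟨![(ζ ^ i - 1)⁻¹ * y 0, (ζ ^ (-i) - 1)⁻¹ * y 1], ?_⟩
      ext k
      fin_cases k
      · simp [rZ, Matrix.mulVec, dotProduct, Fin.sum_univ_two, -zpow_neg]
        field_simp
      · simp [rZ, Matrix.mulVec, dotProduct, Fin.sum_univ_two, -zpow_neg]
        field_simp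
    rw [this] at h2
    simp at h2

lemma memL0_s (conj : K →+* K) (hconj : conj ζ = ζ⁻¹) (v : K) (i : ℤ) (hcc : conj (conj v) = v) :
    memL0 K conj ((sZ ζ hz i).val.mulVec ![v, -conj v] - ![v, -conj v]) ↔
      v + ζ ^ i * conj v ∈ integralClosure ℤ K := by
  have h0 : ((sZ ζ hz i).val.mulVec ![v, -conj v] - ![v, -conj v]) 0 = -(v + ζ ^ i * conj v) := by
    simp [sZ, Matrix.mulVec, dotProduct, Fin.sum_univ_two]; ring
  have h1 : ((sZ ζ hz i).val.mulVec ![v, -conj v] - ![v, -conj v]) 1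
      = ζ ^ (-i) * v + conj v := by
    simp [sZ, Matrix.mulVec, dotProduct, Fin.sum_univ_two]; ring
  unfold memL0
  rw [h0, h1, neg_mem_iff]
  refine and_iff_left ?_
  simp [hconj, hcc]
  ring

lemma memL0_add (conj : K →+* K) {x y : Fin 2 → K} (hx : memL0 K conj x) (hy : memL0 K conj y) :
    memL0 K conj (x + y) := by
  refine ⟨add_mem hx.1 hy.1, ?_⟩
  simp [hx.2, hy.2]; ring

lemma memL0_act {e : ℕ} (he : 2 < e) (hζ : IsPrimitiveRoot ζ e)
    (conj : K →+* K) (hconj : conj ζ = ζ⁻¹) (hconj2 : ∀ x, conj (conj x) = x)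
    {g : GL2K K} (hg : g ∈ DH ζ hz 0 1)
    {x : Fin 2 → K} (hx : memL0 K conj x) : memL0 K conj (g.val.mulVec x) := by
  rcases hg with ⟨i, -, rfl⟩ | ⟨i, -, rfl⟩
  · constructor
    · have : ((sZ ζ hz i).val.mulVec x) 0 = ζ ^ i * x 1 := by
        simp [sZ, Matrix.mulVec, dotProduct, Fin.sum_univ_two]
      rw [this, hx.2]
      exact mul_mem (nt_zpow_mem he hζ.pow_eq_one i) (neg_mem (nt_conj_mem conj hx.1))
    · simp [sZ, Matrix.mulVec, dotProduct, Fin.sum_univ_two, hx.2, hconj, hconj2]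
  · constructor
    · have : ((rZ ζ hz i).val.mulVec x) 0 = ζ ^ i * x 0 := by
        simp [rZ, Matrix.mulVec, dotProduct, Fin.sum_univ_two]
      rw [this]
      exact mul_mem (nt_zpow_mem he hζ.pow_eq_one i) hx.1
    · simp [rZ, Matrix.mulVec, dotProduct, Fin.sum_univ_two, hx.2, hconj]

/-- the reflection subgroup -/
lemma s_mem_refl {e : ℕ} (he : 2 < e) (hζ : IsPrimitiveRoot ζ e)
    (conj : K →+* K) (hconj : conj ζ = ζ⁻¹) (hconj2 : ∀ x, conj (conj x) = x) (v : K) (i : ℤ) :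
    sZ ζ hz i ∈ Subgroup.closure {g : GL2K K | g ∈ DH ζ hz 0 1 ∧ IsRefl2 K g ∧
        memL0 K conj (g.val.mulVec ![v, -conj v] - ![v, -conj v])} ↔
      v + ζ ^ i * conj v ∈ integralClosure ℤ K := by
  constructor
  · intro h
    suffices H : ∀ g ∈ Subgroup.closure {g : GL2K K | g ∈ DH ζ hz 0 1 ∧ IsRefl2 K g ∧
        memL0 K conj (g.val.mulVec ![v, -conj v] - ![v, -conj v])},
        g ∈ DH ζ hz 0 1 ∧ memL0 K conj (g.val.mulVec ![v, -conj v] - ![v, -conj v]) by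
      exact (memL0_s ζ hz conj hconj v i (hconj2 v)).1 (H _ h).2
    intro g hg
    induction hg using Subgroup.closure_induction with
    | mem x hx => exact ⟨hx.1, hx.2.2⟩
    | one =>
      refine ⟨one_mem _, ?_⟩
      simp [memL0]
    | mul x y hx hy ihx ihy =>
      refine ⟨mul_mem ihx.1 ihy.1, ?_⟩
      have h1 := memL0_act ζ hz he hζ conj hconj hconj2 ihx.1 ihy.2
      have h2 := memL0_add conj h1 ihx.2
      convert h2 using 1
      rw [Matrix.mulVec_sub, Matrix.mulVec_mulVec, Units.val_mul]
      abel
    | inv x hx ihx =>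
      refine ⟨inv_mem ihx.1, ?_⟩
      have h0 : memL0 K conj (-(x.val.mulVec ![v, -conj v] - ![v, -conj v])) := by
        refine ⟨neg_mem ihx.2.1, ?_⟩
        rw [Pi.neg_apply, ihx.2.2]; simp
      have h1 := memL0_act ζ hz he hζ conj hconj hconj2 (inv_mem ihx.1) h0
      convert h1 using 1
      rw [Matrix.mulVec_neg, Matrix.mulVec_sub, Matrix.mulVec_mulVec, ← Units.val_mul,
        inv_mul_cancel]
      simp
  · intro h
    apply Subgroup.subset_closure
    refine ⟨Or.inl ⟨i, one_dvd _, rfl⟩, refl_s ζ hz i, ?_⟩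
    exact (memL0_s ζ hz conj hconj v i (hconj2 v)).2 h

lemma grp_fwd {e : ℕ} (he : 2 < e) (hζ : IsPrimitiveRoot ζ e)
    (conj : K →+* K) (hconj : conj ζ = ζ⁻¹) (hconj2 : ∀ x, conj (conj x) = x) (a m : ℤ)
    (hm : m ∣ e) (v : K) (w : GL2K K) (hw : w ∈ DH ζ hz 0 1)
    (h : Subgroup.map (MulAut.conj w).toMonoidHom (DH ζ hz a m) =
      Subgroup.closure {g : GL2K K | g ∈ DH ζ hz 0 1 ∧ IsRefl2 K g ∧
        memL0 K conj (g.val.mulVec ![v, -conj v] - ![v, -conj v])}) :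
    ∃ a' : ℤ, 2 ∣ a' - a ∧
      ∀ i : ℤ, v + ζ ^ i * conj v ∈ integralClosure ℤ K ↔ m ∣ i - a' := by
  have key : ∀ i : ℤ, v + ζ ^ i * conj v ∈ integralClosure ℤ K ↔
      w⁻¹ * sZ ζ hz i * w ∈ DH ζ hz a m := by
    intro i
    rw [← s_mem_refl ζ hz he hζ conj hconj hconj2, ← h, Subgroup.mem_map]
    constructor
    · rintro ⟨x, hx, hxi⟩
      have : w * x * w⁻¹ = sZ ζ hz i := by simpa using hxi
      rw [← this]
      convert hx using 1
      group
    · intro hx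
      refine ⟨_, hx, ?_⟩
      simp [mul_assoc]
  rcases hw with ⟨j, -, rfl⟩ | ⟨j, -, rfl⟩
  · refine ⟨2 * j - a, by omega, fun i => ?_⟩
    rw [key, s_inv, ss, rs, s_mem_DH ζ hz hζ a m hm, ← dvd_neg]
    ring_nf
  · refine ⟨2 * j + a, by omega, fun i => ?_⟩
    rw [key, r_inv, rs, sr, s_mem_DH ζ hz hζ a m hm]
    ring_nf

lemma grp_back {e : ℕ} (he : 2 < e) (hζ : IsPrimitiveRoot ζ e)
    (conj : K →+* K) (hconj : conj ζ = ζ⁻¹) (hconj2 : ∀ x, conj (conj x) = x) (a m : ℤ)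
    (v : K) (hv : ∀ i : ℤ, v + ζ ^ i * conj v ∈ integralClosure ℤ K ↔ m ∣ i - a) :
    Subgroup.map (MulAut.conj 1).toMonoidHom (DH ζ hz a m) =
      Subgroup.closure {g : GL2K K | g ∈ DH ζ hz 0 1 ∧ IsRefl2 K g ∧
        memL0 K conj (g.val.mulVec ![v, -conj v] - ![v, -conj v])} := by
  have : (MulAut.conj (1 : GL2K K)).toMonoidHom = MonoidHom.id _ := by
    ext1 x; simp
  rw [this, Subgroup.map_id]
  apply le_antisymm
  · apply DH_le
    · rw [s_mem_refl ζ hz he hζ conj hconj hconj2, hv]; simp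
    · rw [s_mem_refl ζ hz he hζ conj hconj hconj2, hv]; simp
  · rw [Subgroup.closure_le]
    rintro g ⟨⟨i, -, rfl⟩ | ⟨i, -, rfl⟩, h2, h3⟩
    · rw [memL0_s ζ hz conj hconj v i (hconj2 v), hv] at h3
      exact Or.inl ⟨i, h3, rfl⟩
    · exact absurd h2 (not_refl_r ζ hz i)

end grouplemmas

variable (K : Type) [Field K]

/-- **Statement 19.**  Let `e > 2`, `ζ` a primitive `e`-th root of unity,
`K = ℚ(ζ)`, and let complex conjugation on `K` send `ζ` to `ζ⁻¹`.  In `GL₂(K)` set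
`s_i` = the matrix with rows `(0, ζ^i)` and `(ζ^{−i}, 0)`, let
`W = G(e,e,2) = ⟨s_0, s_1⟩`, and for each divisor `d` of `e` set
`G(d,d,2) = ⟨s_0, s_{e/d}⟩` and, when `e/d` is even, `G′(d,d,2) = ⟨s_1, s_{e/d+1}⟩`.
Let `V₀ = { v₁e₁ − v̄₁e₂ }` and `L₀ = { v₁e₁ − v̄₁e₂ : v₁ ∈ ℤ_K }`; for
`x ∈ V₀/L₀` let `W^x_refl` be the subgroup of `W` generated by the reflections of
`W` fixing `x`.  Then: `G(d,d,2)` is conjugate in `W` to some `W^x_refl` if and only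
if `d = 1`, `d = e`, or `d` is a prime power; and, for `e/d` even, `G′(d,d,2)` is
conjugate in `W` to some `W^x_refl` if and only if `d = 1`, or `d < e/2` and `d` is
a prime power. -/
theorem stmt_19 (e d : ℕ) (he : 2 < e) (hd : d ∣ e)
    [Algebra ℚ K] (ζ : K) (hz : ζ ≠ 0)
    (hζ : IsPrimitiveRoot ζ e) (hgen : Algebra.adjoin ℚ {ζ} = ⊤)
    (conj : K →+* K) (hconj : conj ζ = ζ⁻¹) (hconj2 : ∀ x, conj (conj x) = x) :
    ((∃ (v₁ : K) (w : GL2K K),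
        w ∈ Subgroup.closure {sU K ζ hz 0, sU K ζ hz 1} ∧
        Subgroup.map (MulAut.conj w).toMonoidHom
            (Subgroup.closure {sU K ζ hz 0, sU K ζ hz (e / d)})
          = Subgroup.closure
              {g : GL2K K | g ∈ Subgroup.closure {sU K ζ hz 0, sU K ζ hz 1} ∧
                IsRefl2 K g ∧
                memL0 K conj (g.val.mulVec ![v₁, -conj v₁] - ![v₁, -conj v₁])}) ↔
      (d = 1 ∨ d = e ∨ IsPrimePow d)) ∧
    (Even (e / d) →
      ((∃ (v₁ : K) (w : GL2K K),
          w ∈ Subgroup.closure {sU K ζ hz 0, sU K ζ hz 1} ∧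
          Subgroup.map (MulAut.conj w).toMonoidHom
              (Subgroup.closure {sU K ζ hz 1, sU K ζ hz (e / d + 1)})
            = Subgroup.closure
                {g : GL2K K | g ∈ Subgroup.closure {sU K ζ hz 0, sU K ζ hz 1} ∧
                  IsRefl2 K g ∧
                  memL0 K conj (g.val.mulVec ![v₁, -conj v₁] - ![v₁, -conj v₁])}) ↔
        (d = 1 ∨ (2 * d < e ∧ IsPrimePow d)))) := by
  have hz0 : sU K ζ hz 0 = sZ ζ hz 0 := by rw [sU_eq]; rfl
  have hz1 : sU K ζ hz 1 = sZ ζ hz 1 := by rw [sU_eq]; rfl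
  obtain ⟨m, hm⟩ := hd
  have hd0 : 0 < d := Nat.pos_of_ne_zero (by rintro rfl; omega)
  have hdiv : e / d = m := by rw [hm]; exact Nat.mul_div_cancel_left m hd0
  have hme : (m : ℤ) ∣ (e : ℤ) := ⟨d, by rw [hm]; push_cast; ring⟩
  have hW : Subgroup.closure {sU K ζ hz 0, sU K ζ hz 1} = DH ζ hz 0 1 := by
    rw [← closure_pair, zero_add, hz0, hz1]
  have hG : Subgroup.closure {sU K ζ hz 0, sU K ζ hz (e / d)} = DH ζ hz 0 m := by
    rw [← closure_pair, zero_add, hz0, sU_eq, hdiv]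
  have hG' : Subgroup.closure {sU K ζ hz 1, sU K ζ hz (e / d + 1)} = DH ζ hz 1 m := by
    rw [← closure_pair, hz1, sU_eq, hdiv, Nat.cast_add, Nat.cast_one, add_comm]
  rw [hW, hG, hG', hdiv]
  constructor
  · constructor
    · rintro ⟨v, w, hw, h⟩
      obtain ⟨a', -, h'⟩ := grp_fwd ζ hz he hζ conj hconj hconj2 0 m hme v w hw h
      by_contra hc
      push Not at hc
      have := nt_fwd1 he hζ conj hconj2 hm hc.1 hc.2.2 v a' h'
      rw [this, mul_one] at hm
      exact hc.2.1 hm.symm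
    · intro h
      have hv : ∃ v : K, ∀ i : ℤ, v + ζ ^ i * conj v ∈ integralClosure ℤ K ↔ (m : ℤ) ∣ i - 0 := by
        rcases h with rfl | rfl | h
        · rw [one_mul] at hm
          rw [← hm]
          exact nt_back_d1_0 he hζ conj hconj
        · have : m = 1 := by
            have h2 : d * m = d * 1 := by omega
            exact Nat.eq_of_mul_eq_mul_left hd0 h2
          refine ⟨0, fun i => ?_⟩
          subst this
          simp
        · exact nt_back_pp_0 he hζ hm h conj hconj
      obtain ⟨v, hv⟩ := hv
      exact ⟨v, 1, one_mem _, grp_back ζ hz he hζ conj hconj hconj2 0 m v hv⟩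
  · intro hev
    constructor
    · rintro ⟨v, w, hw, h⟩
      obtain ⟨a', ha', h'⟩ := grp_fwd ζ hz he hζ conj hconj hconj2 1 m hme v w hw h
      by_cases hd1 : d = 1
      · exact Or.inl hd1
      right
      by_cases hpp : IsPrimePow d
      · refine ⟨?_, hpp⟩
        by_contra hlt
        have hm2 : m = 2 := by
          obtain ⟨c, rfl⟩ := hev
          rcases Nat.lt_or_ge c 2 with h2 | h2
          · interval_cases c
            · simp at hm; omega
            · rfl
          · exfalso
            have : d * 4 ≤ d * (c + c) := Nat.mul_le_mul_left d (by omega)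
            omega
        subst hm2
        exact (nt_fwd2 he hζ hgen conj hconj hconj2 v a' (by omega) h').elim
      · exfalso
        have := nt_fwd1 he hζ conj hconj2 hm hd1 hpp v a' h'
        rw [this] at hev
        exact absurd hev (by decide)
    · intro h
      have hv : ∃ v : K, ∀ i : ℤ, v + ζ ^ i * conj v ∈ integralClosure ℤ K ↔ (m : ℤ) ∣ i - 1 := by
        rcases h with rfl | ⟨h1, h2⟩
        · rw [one_mul] at hm
          rw [← hm]
          exact nt_back_d1_1 he hζ conj hconj
        · refine nt_back_pp_1 he hζ hm hev ?_ h2 conj hconj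
          by_contra hc
          have : d * m ≤ d * 2 := Nat.mul_le_mul_left d (by omega)
          omega
      obtain ⟨v, hv⟩ := hv
      exact ⟨v, 1, one_mem _, grp_back ζ hz he hζ conj hconj hconj2 1 m v hv⟩

end Spets
end
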